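/- arXiv:1306.0435 — 5 statements merged into one kernel-verified Lean document; each statement's English description precedes it below -/
import Mathlib

section
/- Let Q ∈ L²_unif(ℝ) and u ∈ H¹(ℝ). Then for every ε ∈ (0,1] one has |∫_ℝ Q(x) · conj(u'(x)) · u(x) dx| ≤ ‖Q‖_{L²_unif(ℝ)} · ( ε ‖u'‖²_{L²(ℝ)} + 4 ε^{−3} ‖u‖²_{L²(ℝ)} ). -/
open MeasureTheory

/-- The Stepanov `L²_unif` norm: `(sup_t ∫_t^{t+1} |Q|²)^{1/2}`. -/
noncomputable def stepL2 (Q : ℝ → ℂ) : ℝ :=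
  Real.sqrt (⨆ t : ℝ, ∫ s in t..(t + 1), ‖Q s‖ ^ 2)

/-- The Stepanov `L¹_unif` norm: `sup_t ∫_t^{t+1} |τ|`. -/
noncomputable def stepL1 (τ : ℝ → ℂ) : ℝ :=
  ⨆ t : ℝ, ∫ s in t..(t + 1), ‖τ s‖

/-- Membership in the Stepanov space `L²_unif(ℝ)`: locally square integrable with
finite Stepanov norm. -/
def InStepL2 (Q : ℝ → ℂ) : Prop :=
  AEStronglyMeasurable Q volume ∧
  LocallyIntegrable (fun s => ‖Q s‖ ^ 2) volume ∧
  BddAbove (Set.range fun t : ℝ => ∫ s in t..(t + 1), ‖Q s‖ ^ 2)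

/-- Membership in the Stepanov space `L¹_unif(ℝ)`: locally integrable with
finite Stepanov norm. -/
def InStepL1 (τ : ℝ → ℂ) : Prop :=
  LocallyIntegrable τ volume ∧
  BddAbove (Set.range fun t : ℝ => ∫ s in t..(t + 1), ‖τ s‖)

/-- `u ∈ H¹(ℝ)` with derivative `u'`: `u` is absolutely continuous with
`u x = u 0 + ∫_0^x u'`, and both `u` and `u'` are square integrable. -/
def InH1 (u u' : ℝ → ℂ) : Prop :=
  LocallyIntegrable u' volume ∧
  (∀ x : ℝ, u x = u 0 + ∫ s in (0:ℝ)..x, u' s) ∧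
  MemLp u 2 volume ∧ MemLp u' 2 volume

/-! The integral is split over the cells `(n, n + 1]`. On a cell, averaging
`‖u x‖ ≤ ‖u y‖ + ∫ ‖u'‖` over `y` in a subinterval of length `δ ^ 2` bounds `‖u‖` pointwise by
`δ⁻¹ B + δ A`, where `A` and `B` are the `L²` norms of `u'` and `u` on the cell. Cauchy–Schwarz
bounds the remaining `∫ ‖Q‖ ‖u'‖` by `‖Q‖_{L²_unif} A`, and Young's inequality turns
`A (δ⁻¹ B + δ A)` into a combination of `A ^ 2` and `B ^ 2`, which sums over the cells. The choice
is `δ = ε / 3`; the subinterval fits into the cell as long as `δ ≤ 1`. -/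

section LpNorm

variable {α E F : Type*} [MeasurableSpace α] [NormedAddCommGroup E] [NormedAddCommGroup F]
  {μ ν : Measure α} {f : α → E} {g : α → F}

lemma sq_lpNorm_two (hf : AEStronglyMeasurable f μ) :
    lpNorm f 2 μ ^ 2 = ∫ x, ‖f x‖ ^ 2 ∂μ := by
  have hint : 0 ≤ ∫ x, ‖f x‖ ^ 2 ∂μ := integral_nonneg fun _ ↦ by positivity
  rw [lpNorm_eq_integral_norm_rpow_toReal two_ne_zero ENNReal.ofNat_ne_top hf]
  simpa [← one_div, ← Real.sqrt_eq_rpow] using Real.sq_sqrt hint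

lemma lpNorm_mono_measure {p : ENNReal} (hf : MemLp f p ν) (hμν : μ ≤ ν) :
    lpNorm f p μ ≤ lpNorm f p ν := by
  rw [← toReal_eLpNorm hf.1, ← toReal_eLpNorm (hf.1.mono_measure hμν)]
  exact ENNReal.toReal_mono hf.2.ne (eLpNorm_mono_measure f hμν)

lemma integral_norm_mul_norm_le_lpNorm_mul_lpNorm {p q : ENNReal} [p.HolderConjugate q]
    (hf : MemLp f p μ) (hg : MemLp g q μ) :
    ∫ x, ‖f x‖ * ‖g x‖ ∂μ ≤ lpNorm f p μ * lpNorm g q μ := by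
  have hfg : AEStronglyMeasurable (fun x ↦ ‖f x‖ * ‖g x‖) μ := hf.1.norm.mul hg.1.norm
  have holder : eLpNorm (fun x ↦ ‖f x‖ * ‖g x‖) 1 μ ≤ eLpNorm f p μ * eLpNorm g q μ := by
    simpa [Pi.mul_def] using
      eLpNorm_smul_le_mul_eLpNorm (p := p) (q := q) (r := 1) hg.1.norm hf.1.norm
  calc ∫ x, ‖f x‖ * ‖g x‖ ∂μ = (eLpNorm (fun x ↦ ‖f x‖ * ‖g x‖) 1 μ).toReal := by
        simp [toReal_eLpNorm hfg, lpNorm_one_eq_integral_norm hfg]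
    _ ≤ (eLpNorm f p μ * eLpNorm g q μ).toReal :=
        ENNReal.toReal_mono (ENNReal.mul_ne_top hf.2.ne hg.2.ne) holder
    _ = lpNorm f p μ * lpNorm g q μ := by
        rw [ENNReal.toReal_mul, toReal_eLpNorm hf.1, toReal_eLpNorm hg.1]

lemma integral_norm_le_sqrt_mul_lpNorm_two [IsFiniteMeasure μ] (hf : MemLp f 2 μ) :
    ∫ x, ‖f x‖ ∂μ ≤ √(μ.real Set.univ) * lpNorm f 2 μ := by
  simpa [lpNorm_const', Real.sqrt_eq_rpow] using
    integral_norm_mul_norm_le_lpNorm_mul_lpNorm (p := 2) (memLp_const (1 : ℝ)) hf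

end LpNorm

section CountablePartition

variable {α ι E : Type*} [MeasurableSpace α] [NormedAddCommGroup E] [Countable ι]
  {μ : Measure α} {s : ι → Set α} {g : α → ℝ}

lemma integrable_of_forall_setIntegral_norm_le {f : α → E} (hs : ∀ i, MeasurableSet (s i))
    (hdisj : Pairwise (Function.onFun Disjoint s)) (hcover : ⋃ i, s i = Set.univ)
    (hf : ∀ i, IntegrableOn f (s i) μ) (hg : Integrable g μ)
    (hfg : ∀ i, ∫ x in s i, ‖f x‖ ∂μ ≤ ∫ x in s i, g x ∂μ) : Integrable f μ := by
  rw [← integrableOn_univ, ← hcover]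
  refine integrableOn_iUnion_of_summable_integral_norm hf ?_
  exact .of_nonneg_of_le (fun _ ↦ integral_nonneg fun _ ↦ norm_nonneg _) hfg
    (hasSum_integral_iUnion hs hdisj hg.integrableOn).summable

lemma integral_le_of_forall_setIntegral_le {f : α → ℝ} (hs : ∀ i, MeasurableSet (s i))
    (hdisj : Pairwise (Function.onFun Disjoint s)) (hcover : ⋃ i, s i = Set.univ)
    (hf : Integrable f μ) (hg : Integrable g μ)
    (hfg : ∀ i, ∫ x in s i, f x ∂μ ≤ ∫ x in s i, g x ∂μ) : ∫ x, f x ∂μ ≤ ∫ x, g x ∂μ := by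
  have hsum {h : α → ℝ} (hh : Integrable h μ) :
      HasSum (fun i ↦ ∫ x in s i, h x ∂μ) (∫ x, h x ∂μ) := by
    simpa only [hcover, setIntegral_univ] using
      hasSum_integral_iUnion hs hdisj hh.integrableOn
  exact hasSum_le hfg (hsum hf) (hsum hg)

end CountablePartition

section Primitive

variable {E F : Type*} [NormedAddCommGroup E] [NormedSpace ℝ E] [NormedAddCommGroup F]
  {u u' : ℝ → E} {Q : ℝ → F} {a b x δ ε : ℝ}

/-- `u` is a primitive of `u'` on `s`: increments of `u` between points of `s` are integrals
of `u'`. Differentiability of `u` is not required. -/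
def IsPrimitiveOn (u u' : ℝ → E) (s : Set ℝ) : Prop :=
  ∀ x ∈ s, ∀ y ∈ s, u y - u x = ∫ t in x..y, u' t

lemma IsPrimitiveOn.mono {s t : Set ℝ} (h : IsPrimitiveOn u u' t) (hst : s ⊆ t) :
    IsPrimitiveOn u u' s :=
  fun x hx y hy ↦ h x (hst hx) y (hst hy)

lemma IsPrimitiveOn.norm_le_average_add (h : IsPrimitiveOn u u' (Set.Icc a b)) (hab : a < b)
    (hu : IntegrableOn u (Set.Ioc a b)) (hu' : IntegrableOn u' (Set.Ioc a b))
    (hx : x ∈ Set.Icc a b) :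
    ‖u x‖ ≤ (⨍ y in Set.Ioc a b, ‖u y‖) + ∫ y in Set.Ioc a b, ‖u' y‖ := by
  obtain ⟨y, hy, hmean⟩ : ∃ y ∈ Set.Ioc a b, ‖u y‖ ≤ ⨍ y in Set.Ioc a b, ‖u y‖ :=
    exists_le_setAverage (by simpa using hab) measure_Ioc_lt_top.ne hu.norm
  have hy' := Set.Ioc_subset_Icc_self hy
  calc ‖u x‖ ≤ ‖u y‖ + ‖u x - u y‖ := norm_le_norm_add_norm_sub' _ _
    _ ≤ _ := by
      gcongr
      rw [h y hy' x hx]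
      refine intervalIntegral.norm_integral_le_integral_norm_uIoc.trans ?_
      exact setIntegral_mono_set hu'.norm (.of_forall fun _ ↦ norm_nonneg _)
        (Set.Ioc_subset_Ioc (le_min hy'.1 hx.1) (max_le hy'.2 hx.2)).eventuallyLE

lemma IsPrimitiveOn.norm_le_of_mem_Icc_add_sq (hδ : 0 < δ)
    (h : IsPrimitiveOn u u' (Set.Icc a (a + δ ^ 2)))
    (hu : MemLp u 2 (volume.restrict (Set.Ioc a (a + δ ^ 2))))
    (hu' : MemLp u' 2 (volume.restrict (Set.Ioc a (a + δ ^ 2))))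
    (hx : x ∈ Set.Icc a (a + δ ^ 2)) :
    ‖u x‖ ≤ δ⁻¹ * lpNorm u 2 (volume.restrict (Set.Ioc a (a + δ ^ 2))) +
      δ * lpNorm u' 2 (volume.restrict (Set.Ioc a (a + δ ^ 2))) := by
  set μ := volume.restrict (Set.Ioc a (a + δ ^ 2))
  have hμ : μ.real Set.univ = δ ^ 2 := by simp [μ, sq_nonneg]
  have hL1 {v : ℝ → E} (hv : MemLp v 2 μ) : ∫ y, ‖v y‖ ∂μ ≤ δ * lpNorm v 2 μ := by
    simpa only [hμ, Real.sqrt_sq hδ.le] using integral_norm_le_sqrt_mul_lpNorm_two hv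
  have hmean : ⨍ y, ‖u y‖ ∂μ ≤ δ⁻¹ * lpNorm u 2 μ := by
    rw [average_eq, hμ, smul_eq_mul]
    calc (δ ^ 2)⁻¹ * ∫ y, ‖u y‖ ∂μ ≤ (δ ^ 2)⁻¹ * (δ * lpNorm u 2 μ) := by gcongr; exact hL1 hu
      _ = δ⁻¹ * lpNorm u 2 μ := by field_simp
  exact (h.norm_le_average_add (lt_add_of_pos_right a (by positivity))
    (hu.integrable one_le_two) (hu'.integrable one_le_two) hx).trans (add_le_add hmean (hL1 hu'))

lemma exists_mem_Icc_add_subset_Icc {r : ℝ} (hr : 0 ≤ r) (hrab : r ≤ b - a)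
    (hx : x ∈ Set.Icc a b) :
    ∃ c, x ∈ Set.Icc c (c + r) ∧ a ≤ c ∧ c + r ≤ b := by
  rcases le_total (x + r) b with hxr | hxr
  · exact ⟨x, ⟨le_rfl, by linarith⟩, hx.1, hxr⟩
  · exact ⟨b - r, ⟨by linarith, by linarith [hx.2]⟩, by linarith, by linarith⟩

lemma IsPrimitiveOn.norm_le_inv_mul_lpNorm_add (hδ : 0 < δ) (hδab : δ ^ 2 ≤ b - a)
    (h : IsPrimitiveOn u u' (Set.Icc a b)) (hu : MemLp u 2 (volume.restrict (Set.Ioc a b)))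
    (hu' : MemLp u' 2 (volume.restrict (Set.Ioc a b))) (hx : x ∈ Set.Icc a b) :
    ‖u x‖ ≤ δ⁻¹ * lpNorm u 2 (volume.restrict (Set.Ioc a b)) +
      δ * lpNorm u' 2 (volume.restrict (Set.Ioc a b)) := by
  obtain ⟨c, hxc, hac, hcb⟩ := exists_mem_Icc_add_subset_Icc (sq_nonneg δ) hδab hx
  have hμ : volume.restrict (Set.Ioc c (c + δ ^ 2)) ≤ volume.restrict (Set.Ioc a b) :=
    Measure.restrict_mono_set volume (Set.Ioc_subset_Ioc hac hcb)
  refine ((h.mono (Set.Icc_subset_Icc hac hcb)).norm_le_of_mem_Icc_add_sq hδ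
    (hu.mono_measure hμ) (hu'.mono_measure hμ) hxc).trans ?_
  gcongr <;> exact lpNorm_mono_measure ‹_› hμ

lemma mul_inv_mul_add_mul_le (A B : ℝ) (hε : 0 < ε) :
    A * ((ε / 3)⁻¹ * B + ε / 3 * A) ≤ ε * A ^ 2 + 4 * ε⁻¹ ^ 3 * B ^ 2 := by
  have hdiff : ε * A ^ 2 + 4 * ε⁻¹ ^ 3 * B ^ 2 - A * ((ε / 3)⁻¹ * B + ε / 3 * A) =
      2 * ε / 3 * (A - 9 / 4 * ε⁻¹ ^ 2 * B) ^ 2 + 5 / 8 * ε⁻¹ ^ 3 * B ^ 2 := by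
    field_simp
    ring
  have hnonneg : 0 ≤ 2 * ε / 3 * (A - 9 / 4 * ε⁻¹ ^ 2 * B) ^ 2 + 5 / 8 * ε⁻¹ ^ 3 * B ^ 2 := by
    positivity
  linarith

lemma IsPrimitiveOn.integrableOn_norm_mul_norm_mul_norm (hab : a < b)
    (h : IsPrimitiveOn u u' (Set.Icc a b)) (hQ : MemLp Q 2 (volume.restrict (Set.Ioc a b)))
    (hu : MemLp u 2 (volume.restrict (Set.Ioc a b)))
    (hu' : MemLp u' 2 (volume.restrict (Set.Ioc a b))) :
    IntegrableOn (fun x ↦ ‖Q x‖ * ‖u' x‖ * ‖u x‖) (Set.Ioc a b) := by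
  have hbound : ∀ x ∈ Set.Ioc a b, ‖‖u x‖‖ ≤ _ := fun x hx ↦
    (norm_norm (u x)).trans_le <| h.norm_le_average_add hab (hu.integrable one_le_two)
      (hu'.integrable one_le_two) (Set.Ioc_subset_Icc_self hx)
  exact (hQ.norm.integrable_mul hu'.norm).mul_bdd hu.1.norm
    (ae_restrict_of_forall_mem measurableSet_Ioc hbound)

lemma IsPrimitiveOn.setIntegral_norm_mul_norm_mul_norm_le (hε : 0 < ε)
    (hεab : (ε / 3) ^ 2 ≤ b - a) (h : IsPrimitiveOn u u' (Set.Icc a b))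
    (hQ : MemLp Q 2 (volume.restrict (Set.Ioc a b)))
    (hu : MemLp u 2 (volume.restrict (Set.Ioc a b)))
    (hu' : MemLp u' 2 (volume.restrict (Set.Ioc a b))) :
    ∫ x in Set.Ioc a b, ‖Q x‖ * ‖u' x‖ * ‖u x‖ ≤
      lpNorm Q 2 (volume.restrict (Set.Ioc a b)) *
        (ε * (∫ x in Set.Ioc a b, ‖u' x‖ ^ 2) + 4 * ε⁻¹ ^ 3 * ∫ x in Set.Ioc a b, ‖u x‖ ^ 2) := by
  have hab : a < b := sub_pos.mp <| (by positivity : 0 < (ε / 3) ^ 2).trans_le hεab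
  set μ := volume.restrict (Set.Ioc a b)
  set A := lpNorm u' 2 μ
  set B := lpNorm u 2 μ
  set M := (ε / 3)⁻¹ * B + ε / 3 * A
  have hQ_nonneg : 0 ≤ lpNorm Q 2 μ := lpNorm_nonneg
  have hA : 0 ≤ A := lpNorm_nonneg
  have hB : 0 ≤ B := lpNorm_nonneg
  have hM : 0 ≤ M := by positivity
  calc ∫ x, ‖Q x‖ * ‖u' x‖ * ‖u x‖ ∂μ
      ≤ ∫ x, ‖Q x‖ * ‖u' x‖ * M ∂μ := by
        refine setIntegral_mono_on (h.integrableOn_norm_mul_norm_mul_norm hab hQ hu hu')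
          ((hQ.norm.integrable_mul hu'.norm).mul_const M) measurableSet_Ioc fun x hx ↦ ?_
        gcongr
        exact h.norm_le_inv_mul_lpNorm_add (by positivity) hεab hu hu'
          (Set.Ioc_subset_Icc_self hx)
    _ = (∫ x, ‖Q x‖ * ‖u' x‖ ∂μ) * M := integral_mul_const M _
    _ ≤ lpNorm Q 2 μ * A * M :=
        mul_le_mul_of_nonneg_right (integral_norm_mul_norm_le_lpNorm_mul_lpNorm hQ hu') hM
    _ = lpNorm Q 2 μ * (A * M) := mul_assoc _ _ _
    _ ≤ lpNorm Q 2 μ * (ε * A ^ 2 + 4 * ε⁻¹ ^ 3 * B ^ 2) := by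
        gcongr
        exact mul_inv_mul_add_mul_le A B hε
    _ = _ := by rw [sq_lpNorm_two hu.1, sq_lpNorm_two hu'.1]

theorem IsPrimitiveOn.integrable_and_integral_norm_mul_norm_mul_norm_le {K : ℝ}
    (h : IsPrimitiveOn u u' Set.univ)
    (hQ : ∀ n : ℤ, MemLp Q 2 (volume.restrict (Set.Ioc (n : ℝ) (n + 1))))
    (hK : ∀ n : ℤ, lpNorm Q 2 (volume.restrict (Set.Ioc (n : ℝ) (n + 1))) ≤ K)
    (hu : MemLp u 2) (hu' : MemLp u' 2) (hε : 0 < ε) (hε3 : ε ≤ 3) :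
    Integrable (fun x ↦ ‖Q x‖ * ‖u' x‖ * ‖u x‖) ∧
      ∫ x, ‖Q x‖ * ‖u' x‖ * ‖u x‖ ≤
        K * (ε * (∫ x, ‖u' x‖ ^ 2) + 4 * ε⁻¹ ^ 3 * ∫ x, ‖u x‖ ^ 2) := by
  set w : ℝ → ℝ := fun x ↦ ‖Q x‖ * ‖u' x‖ * ‖u x‖
  set g : ℝ → ℝ := fun x ↦ K * (ε * ‖u' x‖ ^ 2 + 4 * ε⁻¹ ^ 3 * ‖u x‖ ^ 2)
  have hu2 := hu.norm.integrable_sq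
  have hu'2 := hu'.norm.integrable_sq
  have hg : Integrable g := ((hu'2.const_mul ε).add (hu2.const_mul _)).const_mul K
  have hint_g {μ : Measure ℝ} (hμ : μ ≤ volume) :
      ∫ x, g x ∂μ = K * (ε * (∫ x, ‖u' x‖ ^ 2 ∂μ) + 4 * ε⁻¹ ^ 3 * ∫ x, ‖u x‖ ^ 2 ∂μ) := by
    rw [integral_const_mul, integral_add ((hu'2.mono_measure hμ).const_mul _)
      ((hu2.mono_measure hμ).const_mul _), integral_const_mul, integral_const_mul]
  have hw (n : ℤ) : IntegrableOn w (Set.Ioc (n : ℝ) (n + 1)) :=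
    (h.mono (Set.subset_univ _)).integrableOn_norm_mul_norm_mul_norm (lt_add_one _) (hQ n)
      (hu.restrict _) (hu'.restrict _)
  have hcell (n : ℤ) :
      ∫ x in Set.Ioc (n : ℝ) (n + 1), w x ≤ ∫ x in Set.Ioc (n : ℝ) (n + 1), g x := by
    rw [hint_g Measure.restrict_le_self]
    refine ((h.mono (Set.subset_univ _)).setIntegral_norm_mul_norm_mul_norm_le hε (by nlinarith)
      (hQ n) (hu.restrict _) (hu'.restrict _)).trans ?_
    gcongr
    exact hK n
  have hmeas (n : ℤ) : MeasurableSet (Set.Ioc (n : ℝ) (n + 1)) := measurableSet_Ioc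
  have hdisj := Set.pairwise_disjoint_Ioc_intCast ℝ
  have hcover := iUnion_Ioc_intCast ℝ
  have hw_norm (x : ℝ) : ‖w x‖ = w x := Real.norm_of_nonneg (by positivity)
  have hw_int : Integrable w := integrable_of_forall_setIntegral_norm_le hmeas hdisj hcover hw hg
    (by simpa only [hw_norm] using hcell)
  exact ⟨hw_int, (integral_le_of_forall_setIntegral_le hmeas hdisj hcover hw_int hg hcell).trans_eq
    (hint_g le_rfl)⟩

end Primitive

section Stepanov

variable {Q u u' : ℝ → ℂ}

lemma InH1.isPrimitiveOn_univ (hu : InH1 u u') : IsPrimitiveOn u u' Set.univ := by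
  have hint (x y : ℝ) : IntervalIntegrable u' volume x y :=
    (hu.1.integrableOn_isCompact isCompact_uIcc).intervalIntegrable
  intro x _ y _
  rw [hu.2.1 y, hu.2.1 x, add_sub_add_left_eq_sub,
    intervalIntegral.integral_interval_sub_left (hint _ _) (hint _ _)]

lemma InStepL2.memLp_restrict_Ioc (hQ : InStepL2 Q) (a b : ℝ) :
    MemLp Q 2 (volume.restrict (Set.Ioc a b)) :=
  (memLp_two_iff_integrable_sq_norm hQ.1.restrict).2 <|
    (hQ.2.1.integrableOn_isCompact isCompact_Icc).mono_set Set.Ioc_subset_Icc_self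

lemma InStepL2.lpNorm_restrict_Ioc_le_stepL2 (hQ : InStepL2 Q) (t : ℝ) :
    lpNorm Q 2 (volume.restrict (Set.Ioc t (t + 1))) ≤ stepL2 Q := by
  apply Real.le_sqrt_of_sq_le
  rw [sq_lpNorm_two hQ.1.restrict, ← intervalIntegral.integral_of_le (by simp)]
  exact le_ciSup hQ.2.2 t

theorem Q_form_estimate_general (hQ : InStepL2 Q) (hu : InH1 u u') {ε : ℝ} (hε : 0 < ε)
    (hε3 : ε ≤ 3) :
    Integrable (fun x ↦ Q x * (starRingEnd ℂ) (u' x) * u x) ∧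
      ∫ x, ‖Q x * (starRingEnd ℂ) (u' x) * u x‖ ≤
        stepL2 Q * (ε * (∫ x, ‖u' x‖ ^ 2) + 4 * ε⁻¹ ^ 3 * ∫ x, ‖u x‖ ^ 2) := by
  have ⟨_, _, hu2, hu'2⟩ := hu
  have hmeas : AEStronglyMeasurable (fun x ↦ Q x * (starRingEnd ℂ) (u' x) * u x) volume :=
    (hQ.1.mul hu'2.1.star).mul hu2.1
  rw [← integrable_norm_iff hmeas]
  simpa only [norm_mul, RCLike.norm_conj] using
    hu.isPrimitiveOn_univ.integrable_and_integral_norm_mul_norm_mul_norm_le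
      (fun n ↦ hQ.memLp_restrict_Ioc n (n + 1)) (fun n ↦ hQ.lpNorm_restrict_Ioc_le_stepL2 n)
      hu2 hu'2 hε hε3

end Stepanov

/-- Estimate `|(Q, conj(u')u)_{L²}| ≤ ‖Q‖_{L²_unif} (ε‖u'‖² + 4ε⁻³‖u‖²)` for `ε ∈ (0,1]`. -/
theorem Q_form_estimate (Q u u' : ℝ → ℂ) (hQ : InStepL2 Q) (hu : InH1 u u')
    (ε : ℝ) (hε : 0 < ε) (hε1 : ε ≤ 1) :
    ‖∫ x : ℝ, Q x * (starRingEnd ℂ) (u' x) * u x‖ ≤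
      stepL2 Q * (ε * (∫ x : ℝ, ‖u' x‖ ^ 2) + 4 * ε⁻¹ ^ 3 * (∫ x : ℝ, ‖u x‖ ^ 2)) :=
  (norm_integral_le_integral_norm _).trans
    (Q_form_estimate_general hQ hu hε (by linarith)).2
end

section
/- Let τ ∈ L¹_unif(ℝ) and u ∈ H¹(ℝ). Then for every η ∈ (0,1] one has |∫_ℝ τ(x) |u(x)|² dx| ≤ ‖τ‖_{L¹_unif(ℝ)} · ( η ‖u'‖²_{L²(ℝ)} + 8 η^{−1} ‖u‖²_{L²(ℝ)} ). -/
open MeasureTheory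

/-! Averaging `‖u x‖ ≤ ‖u y‖ + ∫_x^y ‖u'‖` over `y ∈ [x, x + h]` gives
`‖u x‖² ≤ ∫_x^{x+h} (2 h ‖u'‖² + 2 h⁻¹ ‖u‖²)` by Cauchy–Schwarz. Integrating this in `x` against
the measure `‖τ x‖ dx` and exchanging the integrals bounds `∫ ‖τ‖ ‖u‖²` by the same expression
over `ℝ` times `sup_s ∫_{s-h}^s ‖τ‖`, which is at most the Stepanov norm of `τ` once `h ≤ 1`. Take
`h = min (η / 2) 1`. -/

open Set
open scoped ENNReal

section Lintegral

variable {α : Type*} [MeasurableSpace α] {μ : Measure α}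

lemma sq_lintegral_le_measure_univ_mul {f : α → ℝ≥0∞} (hf : AEMeasurable f μ) :
    (∫⁻ a, f a ∂μ) ^ 2 ≤ μ univ * ∫⁻ a, f a ^ 2 ∂μ := by
  have holder : ∫⁻ a, f a ∂μ ≤ μ univ ^ (1 / 2 : ℝ) * (∫⁻ a, f a ^ 2 ∂μ) ^ (1 / 2 : ℝ) := by
    simpa using ENNReal.lintegral_mul_le_Lp_mul_Lq μ Real.HolderConjugate.two_two
      (aemeasurable_const (b := 1)) hf
  calc (∫⁻ a, f a ∂μ) ^ 2
      ≤ (μ univ ^ (1 / 2 : ℝ) * (∫⁻ a, f a ^ 2 ∂μ) ^ (1 / 2 : ℝ)) ^ 2 := by gcongr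
    _ = μ univ * ∫⁻ a, f a ^ 2 ∂μ := by
      rw [mul_pow, ← ENNReal.rpow_mul_natCast, ← ENNReal.rpow_mul_natCast]
      norm_num

lemma lintegral_enorm_sq_eq_ofReal {E : Type*} [NormedAddCommGroup E] {u : α → E}
    (hu : MemLp u 2 μ) : ∫⁻ a, ‖u a‖ₑ ^ 2 ∂μ = ENNReal.ofReal (∫ a, ‖u a‖ ^ 2 ∂μ) := by
  rw [ofReal_integral_eq_lintegral_ofReal (hu.integrable_norm_pow two_ne_zero)
    (.of_forall fun _ ↦ sq_nonneg _)]
  simp only [ENNReal.ofReal_pow (norm_nonneg _), ofReal_norm]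

end Lintegral

lemma lintegral_setLIntegral_Icc {μ ν : Measure ℝ} [SFinite μ] [SFinite ν] {g : ℝ → ℝ≥0∞}
    (hg : AEMeasurable g μ) (h : ℝ) :
    ∫⁻ x, ∫⁻ s in Icc x (x + h), g s ∂μ ∂ν = ∫⁻ s, ν (Icc (s - h) s) * g s ∂μ := by
  have hmeas : MeasurableSet {p : ℝ × ℝ | p.2 ∈ Icc p.1 (p.1 + h)} :=
    (measurableSet_le measurable_fst measurable_snd).inter
      (measurableSet_le measurable_snd (measurable_fst.add_const h))
  have hmem (x s : ℝ) : s ∈ Icc x (x + h) ↔ x ∈ Icc (s - h) s := by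
    simp only [mem_Icc, sub_le_iff_le_add, and_comm]
  calc ∫⁻ x, ∫⁻ s in Icc x (x + h), g s ∂μ ∂ν
      = ∫⁻ x, ∫⁻ s, (Icc x (x + h)).indicator g s ∂μ ∂ν := by
        simp only [lintegral_indicator measurableSet_Icc]
    _ = ∫⁻ s, ∫⁻ x, (Icc x (x + h)).indicator g s ∂ν ∂μ :=
        lintegral_lintegral_swap (hg.comp_snd.indicator hmeas)
    _ = ∫⁻ s, ∫⁻ x, (Icc (s - h) s).indicator (fun _ ↦ g s) x ∂ν ∂μ := by
        simp only [indicator_apply, hmem]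
    _ = ∫⁻ s, ν (Icc (s - h) s) * g s ∂μ := by
        simp only [lintegral_indicator_const measurableSet_Icc, mul_comm]

lemma ennreal_add_sq_le (a b : ℝ≥0∞) : (a + b) ^ 2 ≤ 2 * (a ^ 2 + b ^ 2) := by
  simpa [show (2 : ℝ) - 1 = 1 by norm_num] using
    ENNReal.rpow_add_le_mul_rpow_add_rpow a b one_le_two

section WindowAverage

variable {f v : ℝ → ℝ≥0∞}

lemma sq_le_setLIntegral_Icc (hf : AEMeasurable f) (hv : AEMeasurable v)
    (hfv : ∀ ⦃x y⦄, x ≤ y → f x ≤ f y + ∫⁻ s in Icc x y, v s) {h : ℝ} (hh : 0 < h) (x : ℝ) :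
    f x ^ 2 ≤ ∫⁻ s in Icc x (x + h),
      (2 * ENNReal.ofReal h * v s ^ 2 + 2 * (ENNReal.ofReal h)⁻¹ * f s ^ 2) := by
  set H := ENNReal.ofReal h
  have hH_inv : H⁻¹ * H = 1 :=
    ENNReal.inv_mul_cancel (ENNReal.ofReal_pos.2 hh).ne' ENNReal.ofReal_ne_top
  set I := Icc x (x + h)
  have hvol : volume I = H := by simp [I, H]
  have hCS : (∫⁻ s in I, v s) ^ 2 ≤ H * ∫⁻ s in I, v s ^ 2 := by
    simpa [hvol] using sq_lintegral_le_measure_univ_mul (hv.restrict (s := I))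
  have hpt (y : ℝ) (hy : y ∈ I) :
      f x ^ 2 ≤ 2 * (H * ∫⁻ s in I, v s ^ 2) + 2 * f y ^ 2 :=
    calc f x ^ 2 ≤ ((∫⁻ s in I, v s) + f y) ^ 2 := by
          grw [hfv hy.1, add_comm, Icc_subset_Icc_right hy.2]
      _ ≤ 2 * ((∫⁻ s in I, v s) ^ 2 + f y ^ 2) := ennreal_add_sq_le _ _
      _ ≤ 2 * (H * ∫⁻ s in I, v s ^ 2) + 2 * f y ^ 2 := by grw [hCS, mul_add]
  calc f x ^ 2 = H⁻¹ * ∫⁻ _ in I, f x ^ 2 := by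
        rw [setLIntegral_const, hvol, mul_left_comm, hH_inv, mul_one]
    _ ≤ H⁻¹ * ∫⁻ y in I, (2 * (H * ∫⁻ s in I, v s ^ 2) + 2 * f y ^ 2) :=
        mul_le_mul_right (setLIntegral_mono' measurableSet_Icc hpt) _
    _ = 2 * H * (H⁻¹ * H) * (∫⁻ s in I, v s ^ 2) + 2 * H⁻¹ * ∫⁻ s in I, f s ^ 2 := by
        rw [lintegral_add_left measurable_const, setLIntegral_const, hvol,
          lintegral_const_mul'' _ (hf.restrict.pow_const 2)]
        ring
    _ = ∫⁻ s in I, (2 * H * v s ^ 2 + 2 * H⁻¹ * f s ^ 2) := by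
        rw [hH_inv, mul_one,
          lintegral_add_left' ((hv.restrict.pow_const 2).const_mul _),
          lintegral_const_mul'' _ (hf.restrict.pow_const 2),
          lintegral_const_mul'' _ (hv.restrict.pow_const 2)]

lemma lintegral_sq_le_of_measure_Icc_le (hf : AEMeasurable f) (hv : AEMeasurable v)
    (hfv : ∀ ⦃x y⦄, x ≤ y → f x ≤ f y + ∫⁻ s in Icc x y, v s) {h : ℝ} (hh : 0 < h)
    {ν : Measure ℝ} [SFinite ν] {M : ℝ≥0∞} (hν : ∀ t, ν (Icc t (t + h)) ≤ M) :
    ∫⁻ x, f x ^ 2 ∂ν ≤ M * (2 * ENNReal.ofReal h * (∫⁻ x, v x ^ 2) +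
      2 * (ENNReal.ofReal h)⁻¹ * ∫⁻ x, f x ^ 2) := by
  set H := ENNReal.ofReal h
  have hv2 : AEMeasurable fun s ↦ 2 * H * v s ^ 2 := (hv.pow_const 2).const_mul _
  have hsum : AEMeasurable fun s ↦ 2 * H * v s ^ 2 + 2 * H⁻¹ * f s ^ 2 :=
    hv2.add ((hf.pow_const 2).const_mul _)
  calc ∫⁻ x, f x ^ 2 ∂ν
      ≤ ∫⁻ x, ∫⁻ s in Icc x (x + h), (2 * H * v s ^ 2 + 2 * H⁻¹ * f s ^ 2) ∂volume ∂ν :=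
        lintegral_mono (sq_le_setLIntegral_Icc hf hv hfv hh)
    _ = ∫⁻ s, ν (Icc (s - h) s) * (2 * H * v s ^ 2 + 2 * H⁻¹ * f s ^ 2) :=
        lintegral_setLIntegral_Icc hsum h
    _ ≤ ∫⁻ s, M * (2 * H * v s ^ 2 + 2 * H⁻¹ * f s ^ 2) := by
        gcongr with s
        simpa only [sub_add_cancel] using hν (s - h)
    _ = M * (2 * H * (∫⁻ x, v x ^ 2) + 2 * H⁻¹ * ∫⁻ x, f x ^ 2) := by
        rw [lintegral_const_mul'' _ hsum, lintegral_add_left' hv2,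
          lintegral_const_mul'' _ (hf.pow_const 2), lintegral_const_mul'' _ (hv.pow_const 2)]

end WindowAverage

section FormBound

variable {E F : Type*} [NormedAddCommGroup E] [NormedSpace ℝ E] [NormedAddCommGroup F]
  {u u' : ℝ → E} {τ : ℝ → F} {M : ℝ}

lemma enorm_le_enorm_add_setLIntegral_Icc (hu' : LocallyIntegrable u')
    (hu : ∀ x, u x = u 0 + ∫ s in (0 : ℝ)..x, u' s) {x y : ℝ} (hxy : x ≤ y) :
    ‖u x‖ₑ ≤ ‖u y‖ₑ + ∫⁻ s in Icc x y, ‖u' s‖ₑ := by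
  have hint (a b : ℝ) : IntervalIntegrable u' volume a b :=
    (hu'.integrableOn_isCompact isCompact_uIcc).intervalIntegrable
  have hdiff : u x = u y - ∫ s in Icc x y, u' s := by
    rw [integral_Icc_eq_integral_Ioc, ← intervalIntegral.integral_of_le hxy, hu x, hu y,
      ← intervalIntegral.integral_interval_sub_left (hint 0 y) (hint 0 x)]
    abel
  calc ‖u x‖ₑ ≤ ‖u y‖ₑ + ‖∫ s in Icc x y, u' s‖ₑ := by rw [hdiff]; exact enorm_sub_le
    _ ≤ ‖u y‖ₑ + ∫⁻ s in Icc x y, ‖u' s‖ₑ := by grw [enorm_integral_le_lintegral_enorm]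

lemma nonneg_of_intervalIntegral_norm_le {a b : ℝ} (hab : a ≤ b) (hM : ∫ s in a..b, ‖τ s‖ ≤ M) :
    0 ≤ M :=
  (intervalIntegral.integral_nonneg hab fun _ _ ↦ norm_nonneg _).trans hM

lemma setLIntegral_enorm_Icc_le_ofReal (hτ : LocallyIntegrable τ) {a b c : ℝ} (hac : a ≤ c)
    (hbc : b ≤ c) (hM : ∫ s in a..c, ‖τ s‖ ≤ M) :
    ∫⁻ s in Icc a b, ‖τ s‖ₑ ≤ ENNReal.ofReal M :=
  calc ∫⁻ s in Icc a b, ‖τ s‖ₑ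
      ≤ ∫⁻ s in Icc a c, ‖τ s‖ₑ := lintegral_mono_set (Icc_subset_Icc_right hbc)
    _ = ENNReal.ofReal (∫ s in a..c, ‖τ s‖) := by
      rw [intervalIntegral.integral_of_le hac, ← integral_Icc_eq_integral_Ioc,
        ofReal_integral_norm_eq_lintegral_enorm (hτ.integrableOn_isCompact isCompact_Icc)]
    _ ≤ ENNReal.ofReal M := ENNReal.ofReal_le_ofReal hM

lemma lintegral_enorm_mul_enorm_sq_le (hτ : LocallyIntegrable τ)
    (hM : ∀ t, ∫ s in t..(t + 1), ‖τ s‖ ≤ M)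
    (hu : ∀ x, u x = u 0 + ∫ s in (0 : ℝ)..x, u' s) (hu2 : MemLp u 2) (hu'2 : MemLp u' 2)
    {h : ℝ} (hh : 0 < h) (hh1 : h ≤ 1) :
    ∫⁻ x, ‖τ x‖ₑ * ‖u x‖ₑ ^ 2 ≤
      ENNReal.ofReal (M * (2 * h * (∫ x, ‖u' x‖ ^ 2) + 2 * h⁻¹ * ∫ x, ‖u x‖ ^ 2)) := by
  have hM0 : 0 ≤ M := nonneg_of_intervalIntegral_norm_le (by simp) (hM 0)
  have hum : AEMeasurable fun x ↦ ‖u x‖ₑ := hu2.aestronglyMeasurable.enorm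
  calc ∫⁻ x, ‖τ x‖ₑ * ‖u x‖ₑ ^ 2
      = ∫⁻ x, ‖u x‖ₑ ^ 2 ∂volume.withDensity fun x ↦ ‖τ x‖ₑ :=
        (lintegral_withDensity_eq_lintegral_mul₀ hτ.aestronglyMeasurable.enorm
          (hum.pow_const 2)).symm
    _ ≤ ENNReal.ofReal M * (2 * ENNReal.ofReal h * (∫⁻ x, ‖u' x‖ₑ ^ 2) +
          2 * (ENNReal.ofReal h)⁻¹ * ∫⁻ x, ‖u x‖ₑ ^ 2) := by
        refine lintegral_sq_le_of_measure_Icc_le hum hu'2.aestronglyMeasurable.enorm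
          (fun x y ↦ enorm_le_enorm_add_setLIntegral_Icc (hu'2.locallyIntegrable one_le_two) hu)
          hh fun t ↦ ?_
        rw [withDensity_apply _ measurableSet_Icc]
        exact setLIntegral_enorm_Icc_le_ofReal hτ (by simp) (by gcongr) (hM t)
    _ = ENNReal.ofReal (M * (2 * h * (∫ x, ‖u' x‖ ^ 2) + 2 * h⁻¹ * ∫ x, ‖u x‖ ^ 2)) := by
        rw [lintegral_enorm_sq_eq_ofReal hu2, lintegral_enorm_sq_eq_ofReal hu'2,
          ENNReal.ofReal_mul hM0, ENNReal.ofReal_add (by positivity) (by positivity),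
          ENNReal.ofReal_mul (by positivity), ENNReal.ofReal_mul zero_le_two,
          ENNReal.ofReal_mul (by positivity), ENNReal.ofReal_mul zero_le_two,
          ENNReal.ofReal_inv_of_pos hh, ENNReal.ofReal_ofNat]

theorem tau_form_estimate_general [CompleteSpace E] (hτ : LocallyIntegrable τ)
    (hM : ∀ t, ∫ s in t..(t + 1), ‖τ s‖ ≤ M)
    (hu : ∀ x, u x = u 0 + ∫ s in (0 : ℝ)..x, u' s) (hu2 : MemLp u 2) (hu'2 : MemLp u' 2)
    {η : ℝ} (hη : 0 < η) :
    Integrable (fun x ↦ ‖τ x‖ * ‖u x‖ ^ 2) ∧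
      ∫ x, ‖τ x‖ * ‖u x‖ ^ 2 ≤
        M * (η * (∫ x, ‖u' x‖ ^ 2) + max 2 (4 * η⁻¹) * ∫ x, ‖u x‖ ^ 2) := by
  have hM0 : 0 ≤ M := nonneg_of_intervalIntegral_norm_le (by simp) (hM 0)
  set h := min (η / 2) 1 with h_def
  have hh : 0 < h := by positivity
  have hη' : 2 * h ≤ η := by linarith [min_le_left (η / 2) 1]
  have hinv : 2 * h⁻¹ ≤ max 2 (4 * η⁻¹) := by
    rcases min_choice (η / 2) 1 with heq | heq <;> rw [h_def, heq]
    · exact le_max_of_le_right (by field_simp; norm_num)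
    · simp
  have hbound := lintegral_enorm_mul_enorm_sq_le hτ hM hu hu2 hu'2 hh (min_le_right _ _)
  have henorm (x : ℝ) : ‖‖τ x‖ * ‖u x‖ ^ 2‖ₑ = ‖τ x‖ₑ * ‖u x‖ₑ ^ 2 := by simp
  have hint : Integrable fun x ↦ ‖τ x‖ * ‖u x‖ ^ 2 := by
    refine ⟨hτ.aestronglyMeasurable.norm.mul (hu2.aestronglyMeasurable.norm.pow 2), ?_⟩
    simpa only [HasFiniteIntegral, henorm] using hbound.trans_lt ENNReal.ofReal_lt_top
  refine ⟨hint, ?_⟩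
  calc ∫ x, ‖τ x‖ * ‖u x‖ ^ 2
      ≤ M * (2 * h * (∫ x, ‖u' x‖ ^ 2) + 2 * h⁻¹ * ∫ x, ‖u x‖ ^ 2) := by
        rw [← ENNReal.ofReal_le_ofReal_iff (by positivity),
          ofReal_integral_eq_lintegral_ofReal hint (.of_forall fun _ ↦ by positivity)]
        simpa only [ENNReal.ofReal_mul (norm_nonneg _), ENNReal.ofReal_pow (norm_nonneg _),
          ofReal_norm] using hbound
    _ ≤ M * (η * (∫ x, ‖u' x‖ ^ 2) + max 2 (4 * η⁻¹) * ∫ x, ‖u x‖ ^ 2) := by gcongr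

end FormBound

/-- Estimate `|(τ, |u|²)_{L²}| ≤ ‖τ‖_{L¹_unif} (η‖u'‖² + 8η⁻¹‖u‖²)` for `η ∈ (0,1]`. -/
theorem tau_form_estimate (τ u u' : ℝ → ℂ) (hτ : InStepL1 τ) (hu : InH1 u u')
    (η : ℝ) (hη : 0 < η) (hη1 : η ≤ 1) :
    ‖∫ x : ℝ, τ x * (‖u x‖ : ℂ) ^ 2‖ ≤
      stepL1 τ * (η * (∫ x : ℝ, ‖u' x‖ ^ 2) + 8 * η⁻¹ * (∫ x : ℝ, ‖u x‖ ^ 2)) := by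
  have hτ_nonneg : 0 ≤ stepL1 τ := nonneg_of_intervalIntegral_norm_le (by simp) (le_ciSup hτ.2 0)
  have hη_inv : 1 ≤ η⁻¹ := (one_le_inv₀ hη).2 hη1
  have hmax : max 2 (4 * η⁻¹) ≤ 8 * η⁻¹ := max_le (by linarith) (by linarith)
  calc ‖∫ x, τ x * (‖u x‖ : ℂ) ^ 2‖
      ≤ ∫ x, ‖τ x‖ * ‖u x‖ ^ 2 := (norm_integral_le_integral_norm _).trans_eq (by simp)
    _ ≤ stepL1 τ * (η * (∫ x, ‖u' x‖ ^ 2) + max 2 (4 * η⁻¹) * ∫ x, ‖u x‖ ^ 2) :=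
      (tau_form_estimate_general hτ.1 (le_ciSup hτ.2) hu.2.1 hu.2.2.1 hu.2.2.2 hη).2
    _ ≤ stepL1 τ * (η * (∫ x, ‖u' x‖ ^ 2) + 8 * η⁻¹ * ∫ x, ‖u x‖ ^ 2) := by gcongr
end

section
/- Let Q ∈ L²_unif(ℝ), τ ∈ L¹_unif(ℝ), K := 2(‖Q‖_{L²_unif(ℝ)} + ‖τ‖_{L¹_unif(ℝ)}), and for u ∈ H¹(ℝ) define t[u] := ∫_ℝ |u'(x)|² dx − ∫_ℝ Q(x)( conj(u'(x)) u(x) + conj(u(x)) u'(x) ) dx + ∫_ℝ τ(x) |u(x)|² dx. Then for every ε ∈ (0,1] and every u ∈ H¹(ℝ): Re t[u] ≥ (1 − Kε) ‖u'‖²_{L²(ℝ)} − 4 K ε^{−3} ‖u‖²_{L²(ℝ)}. -/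
open MeasureTheory

/-- The constant `K = 2(‖Q‖_{L²_unif} + ‖τ‖_{L¹_unif})`. -/
noncomputable def Kc (Q τ : ℝ → ℂ) : ℝ := 2 * (stepL2 Q + stepL1 τ)

/-- The sesquilinear form `t[u] = ‖u'‖² - ∫ Q (conj(u')u + conj(u)u') + ∫ τ|u|²`
associated with the Schrödinger operator with potential `q = Q' + τ`. -/
noncomputable def tform (Q τ u u' : ℝ → ℂ) : ℂ :=
  (Complex.ofReal (∫ x : ℝ, ‖u' x‖ ^ 2))
    - (∫ x : ℝ, Q x * ((starRingEnd ℂ) (u' x) * u x + (starRingEnd ℂ) (u x) * u' x))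
    + ∫ x : ℝ, τ x * (‖u x‖ : ℂ) ^ 2

/-!
On a unit interval `I` and for `0 < δ ≤ 1`, averaging `u x = u y + ∫_y^x u'` over `y` in a
subinterval of length `δ / 2` containing `x` gives
`‖u x‖² ≤ (4 / δ) ∫_I ‖u‖² + δ ∫_I ‖u'‖²`. Multiplying by a weight `w ≥ 0` whose integrals over
unit intervals are at most `S` and summing over the integer translates of `I` yields
`∫ w ‖u‖² ≤ S ((4 / δ) ∫ ‖u‖² + δ ∫ ‖u'‖²)`. The weight `w = ‖τ‖` with `δ = ε` handles the potential
term; the weight `w = ‖Q‖²` with `δ = ε²`, combined with the Cauchy-Schwarz inequality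
`(∫ ‖Q u‖ ‖u'‖)² ≤ (∫ ‖Q‖² ‖u‖²) (∫ ‖u'‖²)`, handles the first-order term.
-/

section CauchySchwarz

theorem sq_integral_norm_mul_norm_le {α E : Type*} [MeasurableSpace α] [NormedAddCommGroup E]
    {μ : Measure α} {f g : α → E} (hf : MemLp f 2 μ) (hg : MemLp g 2 μ) :
    (∫ x, ‖f x‖ * ‖g x‖ ∂μ) ^ 2 ≤ (∫ x, ‖f x‖ ^ 2 ∂μ) * ∫ x, ‖g x‖ ^ 2 ∂μ := by
  have holder : ∫ x, ‖f x‖ * ‖g x‖ ∂μ ≤ √(∫ x, ‖f x‖ ^ 2 ∂μ) * √(∫ x, ‖g x‖ ^ 2 ∂μ) := by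
    simpa [Real.sqrt_eq_rpow] using
      integral_mul_norm_le_Lp_mul_Lq Real.HolderConjugate.two_two (by simpa) (by simpa)
  rw [← Real.sqrt_mul (by positivity)] at holder
  exact (Real.le_sqrt (by positivity) (by positivity)).1 holder

variable {E : Type*} [NormedAddCommGroup E] [NormedSpace ℝ E] {f : ℝ → E} {a b x y : ℝ}

theorem sq_norm_intervalIntegral_le (hf : MemLp f 2 (volume.restrict (Set.Ioc a b)))
    (hx : x ∈ Set.Icc a b) (hy : y ∈ Set.Icc a b) :
    ‖∫ s in x..y, f s‖ ^ 2 ≤ (b - a) * ∫ s in a..b, ‖f s‖ ^ 2 := by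
  have hab : a ≤ b := hx.1.trans hx.2
  have norm_le : ‖∫ s in x..y, f s‖ ≤ ∫ s in Set.Ioc a b, ‖f s‖ :=
    intervalIntegral.norm_integral_le_integral_norm_uIoc.trans <|
      setIntegral_mono_set (hf.integrable one_le_two).norm
        (Filter.Eventually.of_forall fun _ => norm_nonneg _)
        (Set.Ioc_subset_Ioc (le_min hx.1 hy.1) (max_le hx.2 hy.2)).eventuallyLE
  have cauchy_schwarz := sq_integral_norm_mul_norm_le (memLp_const (1 : ℝ)) hf.norm
  simp only [norm_one, one_mul, norm_norm, one_pow,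
    setIntegral_const, Real.volume_real_Ioc_of_le hab, smul_eq_mul, mul_one] at cauchy_schwarz
  rw [intervalIntegral.integral_of_le hab]
  exact (pow_le_pow_left₀ (norm_nonneg _) norm_le 2).trans cauchy_schwarz

theorem norm_integral_mul_conj_add_le {α 𝕜 : Type*} [MeasurableSpace α] [RCLike 𝕜]
    {μ : Measure α} {q v w : α → 𝕜} (hqv : MemLp (fun x => q x * v x) 2 μ) (hw : MemLp w 2 μ) :
    ‖∫ x, q x * ((starRingEnd 𝕜) (w x) * v x + (starRingEnd 𝕜) (v x) * w x) ∂μ‖ ≤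
      2 * ∫ x, ‖q x * v x‖ * ‖w x‖ ∂μ := by
  rw [← integral_const_mul]
  refine norm_integral_le_of_norm_le ((hqv.norm.integrable_mul hw.norm).const_mul 2)
    (Filter.Eventually.of_forall fun x => ?_)
  calc ‖q x * ((starRingEnd 𝕜) (w x) * v x + (starRingEnd 𝕜) (v x) * w x)‖
      ≤ ‖q x‖ * (‖(starRingEnd 𝕜) (w x) * v x‖ + ‖(starRingEnd 𝕜) (v x) * w x‖) := by
        rw [norm_mul]
        gcongr
        exact norm_add_le _ _
    _ = 2 * (‖q x * v x‖ * ‖w x‖) := by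
      simp only [norm_mul, RCLike.norm_conj]
      ring

end CauchySchwarz

section Sobolev

variable {E : Type*} [NormedAddCommGroup E] [NormedSpace ℝ E] {u u' : ℝ → E} {a b x : ℝ}

theorem mul_sq_norm_le_intervalIntegral_add
    (hprim : ∀ x ∈ Set.Icc a b, ∀ y ∈ Set.Icc a b, u x - u y = ∫ s in y..x, u' s)
    (hu : MemLp u 2 (volume.restrict (Set.Ioc a b)))
    (hu' : MemLp u' 2 (volume.restrict (Set.Ioc a b))) (hx : x ∈ Set.Icc a b) :
    (b - a) * ‖u x‖ ^ 2 ≤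
      2 * (∫ s in a..b, ‖u s‖ ^ 2) + 2 * (b - a) ^ 2 * ∫ s in a..b, ‖u' s‖ ^ 2 := by
  have hab : a ≤ b := hx.1.trans hx.2
  set A := ∫ s in a..b, ‖u' s‖ ^ 2
  have pointwise : ∀ y ∈ Set.Icc a b, ‖u x‖ ^ 2 ≤ 2 * ‖u y‖ ^ 2 + 2 * ((b - a) * A) := by
    intro y hy
    calc ‖u x‖ ^ 2
        ≤ (‖u y‖ + ‖u x - u y‖) ^ 2 := by
          gcongr
          exact norm_le_norm_add_norm_sub' _ _
      _ ≤ 2 * (‖u y‖ ^ 2 + ‖u x - u y‖ ^ 2) := add_sq_le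
      _ ≤ 2 * ‖u y‖ ^ 2 + 2 * ((b - a) * A) := by
          rw [hprim x hx y hy, mul_add]
          gcongr
          exact sq_norm_intervalIntegral_le hu' hy hx
  have hu_sq : IntervalIntegrable (fun s => 2 * ‖u s‖ ^ 2) volume a b :=
    ((intervalIntegrable_iff_integrableOn_Ioc_of_le hab).2
      (hu.integrable_norm_pow two_ne_zero)).const_mul 2
  have averaged := intervalIntegral.integral_mono_on hab intervalIntegrable_const
    (hu_sq.add intervalIntegrable_const) pointwise
  rw [intervalIntegral.integral_add hu_sq intervalIntegrable_const,
    intervalIntegral.integral_const_mul] at averaged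
  simp only [intervalIntegral.integral_const, smul_eq_mul] at averaged
  linarith

theorem sq_norm_le_intervalIntegral_add {ℓ : ℝ}
    (hprim : ∀ x ∈ Set.Icc a b, ∀ y ∈ Set.Icc a b, u x - u y = ∫ s in y..x, u' s)
    (hu : MemLp u 2 (volume.restrict (Set.Ioc a b)))
    (hu' : MemLp u' 2 (volume.restrict (Set.Ioc a b))) (hx : x ∈ Set.Icc a b)
    (hℓ : 0 < ℓ) (hℓab : ℓ ≤ b - a) :
    ‖u x‖ ^ 2 ≤ 2 / ℓ * (∫ s in a..b, ‖u s‖ ^ 2) + 2 * ℓ * ∫ s in a..b, ‖u' s‖ ^ 2 := by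
  have hab : a ≤ b := hx.1.trans hx.2
  obtain ⟨c, hac, hcb, hcx⟩ : ∃ c, a ≤ c ∧ c + ℓ ≤ b ∧ x ∈ Set.Icc c (c + ℓ) :=
    ⟨max a (x - ℓ), by grind⟩
  have hIcc : Set.Icc c (c + ℓ) ⊆ Set.Icc a b := Set.Icc_subset_Icc hac hcb
  have hrestrict : volume.restrict (Set.Ioc c (c + ℓ)) ≤ volume.restrict (Set.Ioc a b) :=
    Measure.restrict_mono_set _ (Set.Ioc_subset_Ioc hac hcb)
  have integral_mono {v : ℝ → E} (hv : MemLp v 2 (volume.restrict (Set.Ioc a b))) :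
      ∫ s in c..c + ℓ, ‖v s‖ ^ 2 ≤ ∫ s in a..b, ‖v s‖ ^ 2 :=
    intervalIntegral.integral_mono_interval hac (by linarith) hcb
      (Filter.Eventually.of_forall fun _ => by positivity)
      ((intervalIntegrable_iff_integrableOn_Ioc_of_le hab).2 (hv.integrable_norm_pow two_ne_zero))
  have short := mul_sq_norm_le_intervalIntegral_add
    (fun x hx y hy => hprim x (hIcc hx) y (hIcc hy))
    (hu.mono_measure hrestrict) (hu'.mono_measure hrestrict) hcx
  rw [add_sub_cancel_left] at short
  refine le_of_mul_le_mul_left ?_ hℓ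
  calc ℓ * ‖u x‖ ^ 2
      ≤ 2 * (∫ s in c..c + ℓ, ‖u s‖ ^ 2) + 2 * ℓ ^ 2 * ∫ s in c..c + ℓ, ‖u' s‖ ^ 2 := short
    _ ≤ 2 * (∫ s in a..b, ‖u s‖ ^ 2) + 2 * ℓ ^ 2 * ∫ s in a..b, ‖u' s‖ ^ 2 := by
      gcongr
      exacts [integral_mono hu, integral_mono hu']
    _ = ℓ * (2 / ℓ * (∫ s in a..b, ‖u s‖ ^ 2) + 2 * ℓ * ∫ s in a..b, ‖u' s‖ ^ 2) := by
      field_simp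

end Sobolev

section LocalToGlobal

variable {E : Type*} [NormedAddCommGroup E] {f : ℝ → E} {g : ℝ → ℝ}

theorem integrable_of_forall_intervalIntegral_norm_le (hf : LocallyIntegrable f)
    (hg : Integrable g)
    (hfg : ∀ n : ℤ, ∫ s in (n : ℝ)..n + 1, ‖f s‖ ≤ ∫ s in (n : ℝ)..n + 1, g s) :
    Integrable f := by
  rw [← integrableOn_univ, ← iUnion_Ioc_intCast ℝ]
  refine integrableOn_iUnion_of_summable_integral_norm
    (fun n => (hf.integrableOn_isCompact isCompact_Icc).mono_set Set.Ioc_subset_Icc_self) ?_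
  have hg_sum : Summable fun n : ℤ => ∫ s in (n : ℝ)..n + 1, g s := by
    simpa only [zero_add] using (hg.hasSum_intervalIntegral 0).summable
  refine hg_sum.of_nonneg_of_le (fun n => by positivity) fun n => ?_
  rw [← intervalIntegral.integral_of_le (by simp)]
  exact hfg n

theorem integral_norm_le_of_forall_intervalIntegral_norm_le (hf : LocallyIntegrable f)
    (hg : Integrable g)
    (hfg : ∀ n : ℤ, ∫ s in (n : ℝ)..n + 1, ‖f s‖ ≤ ∫ s in (n : ℝ)..n + 1, g s) :
    ∫ x, ‖f x‖ ≤ ∫ x, g x := by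
  have hf' : Integrable f := integrable_of_forall_intervalIntegral_norm_le hf hg hfg
  exact hasSum_le (fun n => by simpa only [zero_add] using hfg n)
    (hf'.norm.hasSum_intervalIntegral 0) (hg.hasSum_intervalIntegral 0)

end LocalToGlobal

namespace InH1

variable {u u' : ℝ → ℂ}

theorem intervalIntegrable_deriv (hu : InH1 u u') (a b : ℝ) : IntervalIntegrable u' volume a b :=
  (hu.1.integrableOn_isCompact isCompact_uIcc).intervalIntegrable

theorem sub_eq_intervalIntegral (hu : InH1 u u') (x y : ℝ) : u x - u y = ∫ s in y..x, u' s := by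
  rw [hu.2.1 x, hu.2.1 y, add_sub_add_left_eq_sub, intervalIntegral.integral_interval_sub_left
    (hu.intervalIntegrable_deriv 0 x) (hu.intervalIntegrable_deriv 0 y)]

theorem continuous (hu : InH1 u u') : Continuous u := by
  rw [funext hu.2.1]
  exact continuous_const.add
    (intervalIntegral.continuous_primitive hu.intervalIntegrable_deriv 0)

theorem integrable_sq_norm (hu : InH1 u u') : Integrable fun x => ‖u x‖ ^ 2 :=
  hu.2.2.1.integrable_norm_pow two_ne_zero

theorem integrable_sq_norm_deriv (hu : InH1 u u') : Integrable fun x => ‖u' x‖ ^ 2 :=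
  hu.2.2.2.integrable_norm_pow two_ne_zero

theorem integrable_mul_sq_norm_add_mul_sq_norm_deriv (hu : InH1 u u') (c d : ℝ) :
    Integrable fun x => c * ‖u x‖ ^ 2 + d * ‖u' x‖ ^ 2 :=
  (hu.integrable_sq_norm.const_mul c).add (hu.integrable_sq_norm_deriv.const_mul d)

theorem sq_norm_le_intervalIntegral {a δ x : ℝ} (hu : InH1 u u') (hδ : 0 < δ) (hδ1 : δ ≤ 1)
    (hx : x ∈ Set.Icc a (a + 1)) :
    ‖u x‖ ^ 2 ≤ ∫ s in a..a + 1, (4 / δ * ‖u s‖ ^ 2 + δ * ‖u' s‖ ^ 2) := by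
  have sobolev := sq_norm_le_intervalIntegral_add (ℓ := δ / 2)
    (fun x _ y _ => hu.sub_eq_intervalIntegral x y) (hu.2.2.1.restrict _)
    (hu.2.2.2.restrict _) hx (by positivity) (by linarith)
  rw [intervalIntegral.integral_add (hu.integrable_sq_norm.const_mul _).intervalIntegrable
    (hu.integrable_sq_norm_deriv.const_mul _).intervalIntegrable,
    intervalIntegral.integral_const_mul, intervalIntegral.integral_const_mul]
  convert sobolev using 3 <;> ring

variable {w : ℝ → ℝ} {S δ : ℝ}

theorem intervalIntegral_mul_sq_norm_le (hu : InH1 u u') (hw : LocallyIntegrable w)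
    (hw0 : ∀ x, 0 ≤ w x) (hwS : ∀ t, ∫ s in t..t + 1, w s ≤ S) (hδ : 0 < δ) (hδ1 : δ ≤ 1)
    (a : ℝ) :
    ∫ x in a..a + 1, w x * ‖u x‖ ^ 2 ≤
      ∫ x in a..a + 1, S * (4 / δ * ‖u x‖ ^ 2 + δ * ‖u' x‖ ^ 2) := by
  have haa : a ≤ a + 1 := by linarith
  have hw_int : IntervalIntegrable w volume a (a + 1) :=
    (hw.integrableOn_isCompact isCompact_uIcc).intervalIntegrable
  rw [intervalIntegral.integral_const_mul]
  set M := ∫ x in a..a + 1, (4 / δ * ‖u x‖ ^ 2 + δ * ‖u' x‖ ^ 2)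
  calc ∫ x in a..a + 1, w x * ‖u x‖ ^ 2
      ≤ ∫ x in a..a + 1, w x * M :=
        intervalIntegral.integral_mono_on haa
          (hw_int.mul_continuousOn (hu.continuous.norm.pow 2).continuousOn)
          (hw_int.mul_const M)
          fun x hx => mul_le_mul_of_nonneg_left (hu.sq_norm_le_intervalIntegral hδ hδ1 hx) (hw0 x)
    _ = (∫ x in a..a + 1, w x) * M := intervalIntegral.integral_mul_const _ _
    _ ≤ S * M := by
      gcongr
      · exact intervalIntegral.integral_nonneg haa fun _ _ => by positivity
      · exact hwS a

theorem locallyIntegrable_mul_sq_norm (hu : InH1 u u') (hw : LocallyIntegrable w) :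
    LocallyIntegrable fun x => w x * ‖u x‖ ^ 2 :=
  hw.smul_continuous (hu.continuous.norm.pow 2)

theorem integrable_mul_sq_norm (hu : InH1 u u') (hw : LocallyIntegrable w)
    (hw0 : ∀ x, 0 ≤ w x) (hwS : ∀ t, ∫ s in t..t + 1, w s ≤ S) :
    Integrable fun x => w x * ‖u x‖ ^ 2 := by
  refine integrable_of_forall_intervalIntegral_norm_le (hu.locallyIntegrable_mul_sq_norm hw)
    ((hu.integrable_mul_sq_norm_add_mul_sq_norm_deriv (4 / 1) 1).const_mul S) fun n => ?_
  simpa only [norm_mul, norm_pow, norm_norm, Real.norm_of_nonneg (hw0 _)] using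
    hu.intervalIntegral_mul_sq_norm_le hw hw0 hwS one_pos le_rfl n

theorem integral_mul_sq_norm_le (hu : InH1 u u') (hw : LocallyIntegrable w)
    (hw0 : ∀ x, 0 ≤ w x) (hwS : ∀ t, ∫ s in t..t + 1, w s ≤ S) (hδ : 0 < δ) (hδ1 : δ ≤ 1) :
    ∫ x, w x * ‖u x‖ ^ 2 ≤ S * (4 / δ * (∫ x, ‖u x‖ ^ 2) + δ * ∫ x, ‖u' x‖ ^ 2) := by
  have global_bound := integral_norm_le_of_forall_intervalIntegral_norm_le
    (hu.locallyIntegrable_mul_sq_norm hw)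
    ((hu.integrable_mul_sq_norm_add_mul_sq_norm_deriv (4 / δ) δ).const_mul S) fun n => by
      simpa only [norm_mul, norm_pow, norm_norm, Real.norm_of_nonneg (hw0 _)] using
        hu.intervalIntegral_mul_sq_norm_le hw hw0 hwS hδ hδ1 n
  rw [integral_const_mul,
    integral_add (hu.integrable_sq_norm.const_mul _) (hu.integrable_sq_norm_deriv.const_mul _),
    integral_const_mul, integral_const_mul] at global_bound
  simpa only [norm_mul, norm_pow, norm_norm, Real.norm_of_nonneg (hw0 _)] using global_bound

end InH1

theorem stepL2_nonneg (Q : ℝ → ℂ) : 0 ≤ stepL2 Q := Real.sqrt_nonneg _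

theorem stepL1_nonneg (τ : ℝ → ℂ) : 0 ≤ stepL1 τ :=
  Real.iSup_nonneg fun _ => intervalIntegral.integral_nonneg (by linarith) fun _ _ => norm_nonneg _

theorem InStepL2.intervalIntegral_sq_norm_le {Q : ℝ → ℂ} (hQ : InStepL2 Q) (t : ℝ) :
    ∫ s in t..t + 1, ‖Q s‖ ^ 2 ≤ stepL2 Q ^ 2 := by
  have h := le_ciSup hQ.2.2 t
  have h0 : 0 ≤ ∫ s in t..t + 1, ‖Q s‖ ^ 2 :=
    intervalIntegral.integral_nonneg (by linarith) fun _ _ => by positivity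
  rwa [stepL2, Real.sq_sqrt (h0.trans h)]

section Perturbation

variable {Q τ u u' : ℝ → ℂ} {ε : ℝ}

theorem norm_integral_mul_sq_norm_le_stepL1 (hτ : InStepL1 τ) (hu : InH1 u u') (hε : 0 < ε)
    (hε1 : ε ≤ 1) :
    ‖∫ x, τ x * (‖u x‖ : ℂ) ^ 2‖ ≤
      stepL1 τ * (4 * ε⁻¹ ^ 3 * (∫ x, ‖u x‖ ^ 2) + 2 * ε * ∫ x, ‖u' x‖ ^ 2) := by
  have hT := stepL1_nonneg τ
  have div_le_mul_inv_cube : 4 / ε ≤ 4 * ε⁻¹ ^ 3 := by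
    rw [div_eq_mul_inv]
    gcongr
    exact le_self_pow₀ ((one_le_inv₀ hε).2 hε1) three_ne_zero
  calc ‖∫ x, τ x * (‖u x‖ : ℂ) ^ 2‖
      ≤ ∫ x, ‖τ x * (‖u x‖ : ℂ) ^ 2‖ := norm_integral_le_integral_norm _
    _ = ∫ x, ‖τ x‖ * ‖u x‖ ^ 2 := by
      simp only [norm_mul, norm_pow, Complex.norm_real, norm_norm]
    _ ≤ stepL1 τ * (4 / ε * (∫ x, ‖u x‖ ^ 2) + ε * ∫ x, ‖u' x‖ ^ 2) :=
      hu.integral_mul_sq_norm_le (fun x => (hτ.1 x).norm) (fun _ => norm_nonneg _) (le_ciSup hτ.2)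
        hε hε1
    _ ≤ stepL1 τ * (4 * ε⁻¹ ^ 3 * (∫ x, ‖u x‖ ^ 2) + 2 * ε * ∫ x, ‖u' x‖ ^ 2) := by
      gcongr
      linarith

theorem InH1.memLp_mul (hu : InH1 u u') (hQ : InStepL2 Q) : MemLp (fun x => Q x * u x) 2 := by
  refine (memLp_two_iff_integrable_sq_norm
    (hQ.1.mul hu.continuous.aestronglyMeasurable)).2 ?_
  simpa only [Pi.mul_apply, norm_mul, mul_pow] using hu.integrable_mul_sq_norm hQ.2.1
    (fun _ => by positivity) hQ.intervalIntegral_sq_norm_le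

theorem norm_integral_mul_conj_add_le_stepL2 (hQ : InStepL2 Q) (hu : InH1 u u') (hε : 0 < ε)
    (hε1 : ε ≤ 1) :
    ‖∫ x, Q x * ((starRingEnd ℂ) (u' x) * u x + (starRingEnd ℂ) (u x) * u' x)‖ ≤
      stepL2 Q * (4 * ε⁻¹ ^ 3 * (∫ x, ‖u x‖ ^ 2) + 2 * ε * ∫ x, ‖u' x‖ ^ 2) := by
  have hQu := hu.memLp_mul hQ
  have cauchy_schwarz := sq_integral_norm_mul_norm_le hQu hu.2.2.2
  -- With `δ = ε ^ 2`, both summands of `M / ε + ε * A` below have the same multiple of `A`.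
  have weighted := hu.integral_mul_sq_norm_le (δ := ε ^ 2) hQ.2.1 (fun _ => by positivity)
    hQ.intervalIntegral_sq_norm_le (by positivity) (pow_le_one₀ hε.le hε1)
  simp only [norm_mul, mul_pow] at cauchy_schwarz
  have hA : 0 ≤ ∫ x, ‖u' x‖ ^ 2 := by positivity
  have hB : 0 ≤ ∫ x, ‖u x‖ ^ 2 := by positivity
  have hq := stepL2_nonneg Q
  refine (norm_integral_mul_conj_add_le hQu hu.2.2.2).trans (le_of_sq_le_sq ?_ (by positivity))
  simp only [norm_mul]
  set A := ∫ x, ‖u' x‖ ^ 2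
  set B := ∫ x, ‖u x‖ ^ 2
  set M := 4 / ε ^ 2 * B + ε ^ 2 * A with hM
  calc (2 * ∫ x, ‖Q x‖ * ‖u x‖ * ‖u' x‖) ^ 2
      ≤ 4 * ((stepL2 Q ^ 2 * M) * A) := by
        rw [mul_pow, show (2 : ℝ) ^ 2 = 4 by norm_num]
        gcongr
        exact cauchy_schwarz.trans (by gcongr)
    _ = stepL2 Q ^ 2 * (4 * (M / ε) * (ε * A)) := by field_simp
    _ ≤ stepL2 Q ^ 2 * (M / ε + ε * A) ^ 2 := by
      gcongr
      exact four_mul_le_sq_add _ _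
    _ = (stepL2 Q * (4 * ε⁻¹ ^ 3 * B + 2 * ε * A)) ^ 2 := by
      rw [hM, ← mul_pow]
      field_simp
      ring

end Perturbation

/-- Lower bound for the real part of the form `t[u]`:
`Re t[u] ≥ (1 - Kε)‖u'‖² - 4Kε⁻³‖u‖²` for all `ε ∈ (0,1]`. -/
theorem re_tform_lower_bound (Q τ u u' : ℝ → ℂ)
    (hQ : InStepL2 Q) (hτ : InStepL1 τ) (hu : InH1 u u')
    (ε : ℝ) (hε : 0 < ε) (hε1 : ε ≤ 1) :
    (1 - Kc Q τ * ε) * (∫ x : ℝ, ‖u' x‖ ^ 2) - 4 * Kc Q τ * ε⁻¹ ^ 3 * (∫ x : ℝ, ‖u x‖ ^ 2)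
      ≤ (tform Q τ u u').re := by
  have re_Q_le := (Complex.re_le_norm _).trans (norm_integral_mul_conj_add_le_stepL2 hQ hu hε hε1)
  have le_re_τ := neg_le_of_abs_le ((Complex.abs_re_le_norm _).trans
    (norm_integral_mul_sq_norm_le_stepL1 hτ hu hε hε1))
  have slack : 0 ≤ (stepL2 Q + stepL1 τ) * (4 * ε⁻¹ ^ 3 * ∫ x, ‖u x‖ ^ 2) :=
    mul_nonneg (add_nonneg (stepL2_nonneg Q) (stepL1_nonneg τ)) (by positivity)
  rw [tform, Kc, Complex.add_re, Complex.sub_re, Complex.ofReal_re]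
  linarith
end

section
/- Let a, b, s > 0, let m ≥ 0 and α₀ ≥ 0 be real numbers, and let β ∈ ℂ. Suppose ε satisfies 0 < ε ≤ (2a+1)^{−1} and |β| ≤ a ε α₀ + b ε^{−s} m. Then, setting α := α₀ + β, one has |Im α| ≤ 2 a ε Re α + 2 b ε^{−s} m. -/
section RCLike

variable {𝕜 : Type*} [RCLike 𝕜]

theorem abs_mul_re_le_norm {r : ℝ} (hr : |r| ≤ 1) (z : 𝕜) : |r * RCLike.re z| ≤ ‖z‖ := by
  calc |r * RCLike.re z| = |r| * |RCLike.re z| := abs_mul _ _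
    _ ≤ |RCLike.re z| := mul_le_of_le_one_left (abs_nonneg _) hr
    _ ≤ ‖z‖ := RCLike.abs_re_le_norm z

/-- Double the hypothesis: the extra `‖β‖` pays for replacing `re α₀` by `re (α₀ + β)`. -/
theorem norm_le_two_mul_re_add {t c : ℝ} {α₀ β : 𝕜} (ht : |2 * t| ≤ 1)
    (hβ : ‖β‖ ≤ t * RCLike.re α₀ + c) :
    ‖β‖ ≤ 2 * t * RCLike.re (α₀ + β) + 2 * c := by
  have hre : -‖β‖ ≤ 2 * t * RCLike.re β := neg_le_of_abs_le (abs_mul_re_le_norm ht β)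
  calc ‖β‖ = 2 * ‖β‖ + -‖β‖ := by ring
    _ ≤ 2 * (t * RCLike.re α₀ + c) + 2 * t * RCLike.re β := by gcongr
    _ = 2 * t * RCLike.re (α₀ + β) + 2 * c := by rw [map_add]; ring

theorem im_le_of_perturbation_general {t c α₀ : ℝ} {β : 𝕜} (ht : |2 * t| ≤ 1)
    (hβ : ‖β‖ ≤ t * α₀ + c) :
    |RCLike.im ((α₀ : 𝕜) + β)| ≤ 2 * t * RCLike.re ((α₀ : 𝕜) + β) + 2 * c := by
  calc |RCLike.im ((α₀ : 𝕜) + β)| = |RCLike.im β| := by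
        rw [map_add, RCLike.ofReal_im, zero_add]
    _ ≤ ‖β‖ := RCLike.abs_im_le_norm β
    _ ≤ 2 * t * RCLike.re ((α₀ : 𝕜) + β) + 2 * c :=
        norm_le_two_mul_re_add ht (by rwa [RCLike.ofReal_re])

end RCLike

theorem abs_two_mul_mul_le_one {K : Type*} [Field K] [LinearOrder K] [IsStrictOrderedRing K]
    {a ε : K} (ha : 0 ≤ a) (hε : 0 ≤ ε) (h : ε ≤ (2 * a + 1)⁻¹) : |2 * (a * ε)| ≤ 1 := by
  rw [abs_of_nonneg (by positivity)]
  calc 2 * (a * ε) ≤ ε * (2 * a + 1) := by linarith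
    _ ≤ 1 := by rwa [← le_div_iff₀ (by positivity), one_div]

/-- Pointwise form-perturbation lemma: if `|β| ≤ aεα₀ + bε⁻ˢm` with
`0 < ε ≤ (2a+1)⁻¹`, then `α = α₀ + β` satisfies `|Im α| ≤ 2aε Re α + 2bε⁻ˢm`. -/
theorem im_le_of_perturbation (a b s m α₀ ε : ℝ) (β : ℂ)
    (ha : 0 < a) (hb : 0 < b) (hs : 0 < s) (hm : 0 ≤ m) (hα₀ : 0 ≤ α₀)
    (hε : 0 < ε) (hε' : ε ≤ (2 * a + 1)⁻¹)
    (hβ : ‖β‖ ≤ a * ε * α₀ + b * ε ^ (-s) * m) :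
    |((α₀ : ℂ) + β).im| ≤ 2 * a * ε * ((α₀ : ℂ) + β).re + 2 * b * ε ^ (-s) * m := by
  have hsmall : |2 * (a * ε)| ≤ 1 := abs_two_mul_mul_le_one ha.le hε.le hε'
  simpa only [mul_assoc] using! im_le_of_perturbation_general hsmall hβ
end

section
/- Let a, b, s > 0, let α₀ : D → ℝ_{≥0} and β : D → ℂ be functions on a set D, and suppose that for every u ∈ D and every ε ∈ (0, (2a+1)^{−1}] one has |β(u)| ≤ aε α₀(u) + bε^{−s}. Set α(u) := α₀(u) + β(u). Then for every u ∈ D the complex number α(u) belongs to the set M_{a,b,s} := { λ ∈ ℂ : λ₀ ≤ Re λ ≤ λ₁ and |Im λ| ≤ (2a/(2a+1)) Re λ + 2b(2a+1)^s } ∪ { λ ∈ ℂ : Re λ > λ₁ and |Im λ| ≤ 2(s+1) b^{1/(s+1)} (a/s)^{s/(s+1)} (Re λ)^{s/(s+1)} }, where λ₀ := −(b/a)(2a+1)^{s+1} and λ₁ := (bs/a)(2a+1)^{s+1}. -/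
/-!
Since `‖β‖ ≤ aεα₀ + bε⁻ˢ` and `α₀ ≤ Re (α₀ + β) + ‖β‖`, the bound `aε ≤ 1/2` lets one absorb `‖β‖`
on the left, giving `‖β‖ ≤ 2 (aε Re (α₀ + β) + bε⁻ˢ)` for every admissible `ε`. It remains to choose
`ε` according to `R = Re (α₀ + β)`. The minimizer of `ε ↦ aRε + bε⁻ˢ` on `(0, ∞)` solves
`aRε = s bε⁻ˢ`. It is admissible once `R` exceeds `λ₁`, and then yields the power-law bound. For the
remaining `R` the largest admissible `ε` gives an affine bound, whose nonnegativity forces `R ≥ λ₀`.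
-/

/-- The minimizer over `ε > 0` of `A * ε + b * ε ^ (-s)`, for positive `A`, `b` and `s`. -/
noncomputable def balancePoint (A b s : ℝ) : ℝ :=
  (b * s / A) ^ (s + 1)⁻¹

section BalancePoint

variable {A b s : ℝ}

theorem balancePoint_pos (hA : 0 < A) (hb : 0 < b) (hs : 0 < s) : 0 < balancePoint A b s := by
  unfold balancePoint
  positivity

theorem balancePoint_rpow_add_one (hA : 0 < A) (hb : 0 < b) (hs : 0 < s) :
    balancePoint A b s ^ (s + 1) = b * s / A :=
  Real.rpow_inv_rpow (by positivity) (by positivity)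

theorem balancePoint_le_iff {δ : ℝ} (hA : 0 < A) (hb : 0 < b) (hs : 0 < s) (hδ : 0 ≤ δ) :
    balancePoint A b s ≤ δ ↔ b * s / A ≤ δ ^ (s + 1) :=
  Real.rpow_inv_le_iff_of_pos (by positivity) hδ (by positivity)

theorem mul_balancePoint (hA : 0 < A) (hb : 0 < b) (hs : 0 < s) :
    A * balancePoint A b s = s * (b * balancePoint A b s ^ (-s)) := by
  have hε := balancePoint_pos hA hb hs
  calc A * balancePoint A b s
      = A * balancePoint A b s ^ (s + 1) * balancePoint A b s ^ (-s) := by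
        rw [mul_assoc, ← Real.rpow_add hε, add_neg_cancel_comm, Real.rpow_one]
    _ = s * (b * balancePoint A b s ^ (-s)) := by
        rw [balancePoint_rpow_add_one hA hb hs, mul_div_cancel₀ _ hA.ne']
        ring

theorem mul_balancePoint_rpow_neg (hA : 0 < A) (hb : 0 < b) (hs : 0 < s) :
    b * balancePoint A b s ^ (-s) = b ^ (1 / (s + 1)) * (A / s) ^ (s / (s + 1)) := by
  have hexp : 1 / (s + 1) = 1 + -(s / (s + 1)) := by
    field_simp
    ring
  calc b * balancePoint A b s ^ (-s)
      = b * (A / s / b) ^ (s / (s + 1)) := by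
        rw [balancePoint, ← Real.rpow_mul (by positivity), mul_neg, inv_mul_eq_div,
          Real.rpow_neg_eq_inv_rpow, inv_div, div_div, mul_comm s b]
    _ = b * b ^ (-(s / (s + 1))) * (A / s) ^ (s / (s + 1)) := by
        rw [Real.div_rpow (by positivity) hb.le, Real.rpow_neg hb.le]
        ring
    _ = b ^ (1 / (s + 1)) * (A / s) ^ (s / (s + 1)) := by
        rw [hexp, Real.rpow_add hb, Real.rpow_one]

theorem mul_balancePoint_add_mul_rpow_neg (hA : 0 < A) (hb : 0 < b) (hs : 0 < s) :
    A * balancePoint A b s + b * balancePoint A b s ^ (-s) =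
      (s + 1) * b ^ (1 / (s + 1)) * (A / s) ^ (s / (s + 1)) := by
  rw [mul_balancePoint hA hb hs, mul_balancePoint_rpow_neg hA hb hs]
  ring

end BalancePoint

theorem balancePoint_mul_le_inv {a b s c R : ℝ} (ha : 0 < a) (hb : 0 < b) (hs : 0 < s)
    (hc : 0 < c) (hR : b * s / a * c ^ (s + 1) ≤ R) : balancePoint (a * R) b s ≤ c⁻¹ := by
  have hR₀ : 0 < R := lt_of_lt_of_le (by positivity) hR
  rw [balancePoint_le_iff (by positivity) hb hs (by positivity), Real.inv_rpow hc.le, ← div_div,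
    div_le_iff₀ hR₀, inv_mul_eq_div, le_div_iff₀ (by positivity)]
  exact hR

theorem neg_div_mul_rpow_le_iff {a b s c R : ℝ} (ha : 0 < a) (hc : 0 < c) :
    -(b / a) * c ^ (s + 1) ≤ R ↔ 0 ≤ 2 * a / c * R + 2 * b * c ^ s := by
  have hfactor : 2 * a / c * R + 2 * b * c ^ s =
      2 * a / c * (R - -(b / a) * c ^ (s + 1)) := by
    rw [Real.rpow_add_one hc.ne']
    field_simp
    ring
  rw [hfactor, mul_nonneg_iff_of_pos_left (by positivity), sub_nonneg]

theorem norm_le_two_mul_re_add_s7 {𝕜 : Type*} [RCLike 𝕜] {k C x : ℝ} {w : 𝕜} (hk₀ : 0 ≤ k)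
    (hk : k ≤ 1 / 2) (hw : ‖w‖ ≤ k * x + C) :
    ‖w‖ ≤ 2 * (k * RCLike.re ((x : 𝕜) + w) + C) := by
  have hre : RCLike.re ((x : 𝕜) + w) = x + RCLike.re w := by simp
  have hx : x ≤ RCLike.re ((x : 𝕜) + w) + ‖w‖ := by
    linarith [(abs_le.1 (RCLike.abs_re_le_norm w)).1]
  have hkx := mul_le_mul_of_nonneg_left hx hk₀
  have hkw := mul_le_mul_of_nonneg_right hk (norm_nonneg w)
  linarith

/-- The set `M_{a,b,s}` with a free parameter `c` in place of `2a + 1`; it localizes the form when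
the relative bound holds for `0 < ε ≤ c⁻¹`. -/
def formBoundRegion (a b s c : ℝ) : Set ℂ :=
  {z | (-(b / a) * c ^ (s + 1) ≤ z.re ∧ z.re ≤ b * s / a * c ^ (s + 1)) ∧
      |z.im| ≤ 2 * a / c * z.re + 2 * b * c ^ s} ∪
  {z | b * s / a * c ^ (s + 1) < z.re ∧
      |z.im| ≤ 2 * (s + 1) * b ^ (1 / (s + 1)) * (a / s) ^ (s / (s + 1)) * z.re ^ (s / (s + 1))}

theorem mem_formBoundRegion_of_abs_im_le {a b s c : ℝ} {z : ℂ} (ha : 0 < a) (hb : 0 < b)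
    (hs : 0 < s) (hc : 0 < c)
    (hz : ∀ ε : ℝ, 0 < ε → ε ≤ c⁻¹ → |z.im| ≤ 2 * (a * ε * z.re + b * ε ^ (-s))) :
    z ∈ formBoundRegion a b s c := by
  rcases le_or_gt z.re (b * s / a * c ^ (s + 1)) with hle | hgt
  · have him : |z.im| ≤ 2 * a / c * z.re + 2 * b * c ^ s := by
      calc |z.im| ≤ 2 * (a * c⁻¹ * z.re + b * c⁻¹ ^ (-s)) := hz c⁻¹ (by positivity) le_rfl
        _ = 2 * a / c * z.re + 2 * b * c ^ s := by
          rw [Real.inv_rpow hc.le, Real.rpow_neg hc.le, inv_inv]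
          ring
    exact .inl ⟨⟨(neg_div_mul_rpow_le_iff ha hc).2 ((abs_nonneg _).trans him), hle⟩, him⟩
  · have hre : 0 < z.re := lt_trans (by positivity) hgt
    have hA : 0 < a * z.re := by positivity
    refine .inr ⟨hgt, ?_⟩
    calc |z.im|
        ≤ 2 * (a * balancePoint (a * z.re) b s * z.re + b * balancePoint (a * z.re) b s ^ (-s)) :=
          hz _ (balancePoint_pos hA hb hs) (balancePoint_mul_le_inv ha hb hs hc hgt.le)
      _ = 2 * ((s + 1) * b ^ (1 / (s + 1)) * (a * z.re / s) ^ (s / (s + 1))) := by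
          rw [mul_right_comm, mul_balancePoint_add_mul_rpow_neg hA hb hs]
      _ = 2 * (s + 1) * b ^ (1 / (s + 1)) * (a / s) ^ (s / (s + 1)) * z.re ^ (s / (s + 1)) := by
          rw [mul_div_right_comm, Real.mul_rpow (by positivity) hre.le]
          ring

theorem numerical_range_in_M_general {a b s c x : ℝ} {w : ℂ} (ha : 0 < a) (hb : 0 < b)
    (hs : 0 < s) (hac : 2 * a ≤ c)
    (hw : ∀ ε : ℝ, 0 < ε → ε ≤ c⁻¹ → ‖w‖ ≤ a * ε * x + b * ε ^ (-s)) :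
    (x : ℂ) + w ∈ formBoundRegion a b s c := by
  have hc : 0 < c := by linarith
  refine mem_formBoundRegion_of_abs_im_le ha hb hs hc fun ε hε hεc ↦ ?_
  have hhalf : a * ε ≤ 1 / 2 := by
    calc a * ε ≤ a * c⁻¹ := by gcongr
      _ ≤ 1 / 2 := by
        rw [← div_eq_mul_inv, div_le_iff₀ hc]
        linarith
  calc |((x : ℂ) + w).im| = |w.im| := by simp
    _ ≤ ‖w‖ := Complex.abs_im_le_norm w
    _ ≤ 2 * (a * ε * ((x : ℂ) + w).re + b * ε ^ (-s)) :=
      norm_le_two_mul_re_add_s7 (by positivity) hhalf (hw ε hε hεc)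

/-- Numerical-range localization: if a positive form `α₀` and a perturbation `β` satisfy the
relative bound `|β(u)| ≤ aε α₀(u) + bε⁻ˢ` for all `u` and all `0 < ε ≤ (2a+1)⁻¹`, then every
value `α(u) = α₀(u) + β(u)` lies in the set `M_{a,b,s}`. -/
theorem numerical_range_in_M {D : Type*} (a b s : ℝ) (ha : 0 < a) (hb : 0 < b) (hs : 0 < s)
    (α₀ : D → ℝ) (hα₀ : ∀ u, 0 ≤ α₀ u) (β : D → ℂ)
    (hβ : ∀ u, ∀ ε : ℝ, 0 < ε → ε ≤ (2 * a + 1)⁻¹ →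
      ‖β u‖ ≤ a * ε * α₀ u + b * ε ^ (-s)) (u : D) :
    ((α₀ u : ℂ) + β u) ∈
      ({z : ℂ | (-(b / a) * (2 * a + 1) ^ (s + 1) ≤ z.re ∧
            z.re ≤ b * s / a * (2 * a + 1) ^ (s + 1)) ∧
          |z.im| ≤ 2 * a / (2 * a + 1) * z.re + 2 * b * (2 * a + 1) ^ s} ∪
       {z : ℂ | b * s / a * (2 * a + 1) ^ (s + 1) < z.re ∧
          |z.im| ≤ 2 * (s + 1) * b ^ (1 / (s + 1)) * (a / s) ^ (s / (s + 1)) *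
            z.re ^ (s / (s + 1))}) :=
  numerical_range_in_M_general ha hb hs (by linarith) (hβ u)
end
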